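/- Let κ₁ < κ₂ < κ₃ < κ₄ be reals with κ₂ + κ₃ ≠ κ₁ + κ₄, let a₂₃ = (κ₂+κ₃)/2, a₁₄ = (κ₁+κ₄)/2, and b₂ = 2(a₂₃ + a₁₄) + (κ₁κ₄ − κ₂κ₃)/(2(a₂₃ − a₁₄)). Then: if a₁₄ > a₂₃, one has b₂ > κ₂ + 2κ₃ and b₂ > 2κ₁ + κ₄; and if a₁₄ < a₂₃, one has b₂ < 2κ₂ + κ₃ and b₂ < κ₁ + 2κ₄. -/

import Mathlib

/-!
Eliminating `b₁` from the two equations that define `(b₁, b₂)` shows that `b₂` is the quotient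
`(ω₂₃ - ω₁₄) / ((κ₂ + κ₃) - (κ₁ + κ₄))`, and
`(κ₂ + κ₃ + κ₄) * ((κ₂ + κ₃) - (κ₁ + κ₄)) - (ω₂₃ - ω₁₄) = (κ₂ - κ₁) * (κ₃ - κ₁)`.
Hence `b₂ > κ₂ + κ₃ + κ₄` as soon as `κ₂ + κ₃ < κ₁ + κ₄`. The reflection `κᵢ ↦ -κ₅₋ᵢ` changes the
sign of `b₂`, which gives `b₂ < κ₁ + κ₂ + κ₃` when `κ₁ + κ₄ < κ₂ + κ₃`.
-/

section Field

variable {K : Type*} [Field K] (κ₁ κ₂ κ₃ κ₄ : K)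

/-- The transverse speed `b₂` of a P-type 2-line soliton: the second coordinate of the solution of
`b₁ + (κ₂ + κ₃) b₂ = ω₂₃`, `b₁ + (κ₁ + κ₄) b₂ = ω₁₄`, where `ωᵢⱼ = κᵢ² + κᵢκⱼ + κⱼ²`.
It has the junk value `0` when `κ₂ + κ₃ = κ₁ + κ₄`. -/
def transverseSpeed : K :=
  ((κ₂ ^ 2 + κ₂ * κ₃ + κ₃ ^ 2) - (κ₁ ^ 2 + κ₁ * κ₄ + κ₄ ^ 2)) / ((κ₂ + κ₃) - (κ₁ + κ₄))

theorem transverseSpeed_neg_reverse :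
    transverseSpeed (-κ₄) (-κ₃) (-κ₂) (-κ₁) = -transverseSpeed κ₁ κ₂ κ₃ κ₄ := by
  unfold transverseSpeed
  rw [← div_neg]
  congr 1 <;> ring

variable {κ₁ κ₂ κ₃ κ₄}

theorem transverseSpeed_eq_add_div (hne : κ₂ + κ₃ ≠ κ₁ + κ₄) :
    transverseSpeed κ₁ κ₂ κ₃ κ₄ =
      (κ₂ + κ₃) + (κ₁ + κ₄) + (κ₁ * κ₄ - κ₂ * κ₃) / ((κ₂ + κ₃) - (κ₁ + κ₄)) := by
  rw [transverseSpeed, add_div' _ _ _ (sub_ne_zero.mpr hne)]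
  congr 1
  ring

end Field

section LinearOrderedField

variable {K : Type*} [Field K] [LinearOrder K] [IsStrictOrderedRing K] {κ₁ κ₂ κ₃ κ₄ : K}

theorem add_add_lt_transverseSpeed (h12 : κ₁ < κ₂) (h13 : κ₁ < κ₃) (h : κ₂ + κ₃ < κ₁ + κ₄) :
    κ₂ + κ₃ + κ₄ < transverseSpeed κ₁ κ₂ κ₃ κ₄ := by
  have hprod : 0 < (κ₂ - κ₁) * (κ₃ - κ₁) := mul_pos (sub_pos.mpr h12) (sub_pos.mpr h13)
  rw [transverseSpeed, lt_div_iff_of_neg (sub_neg.mpr h)]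
  linarith

theorem transverseSpeed_lt_add_add (h24 : κ₂ < κ₄) (h34 : κ₃ < κ₄) (h : κ₁ + κ₄ < κ₂ + κ₃) :
    transverseSpeed κ₁ κ₂ κ₃ κ₄ < κ₁ + κ₂ + κ₃ := by
  have hreflected : -κ₃ + -κ₂ + -κ₁ < transverseSpeed (-κ₄) (-κ₃) (-κ₂) (-κ₁) :=
    add_add_lt_transverseSpeed (neg_lt_neg h34) (neg_lt_neg h24) (by linarith)
  rw [transverseSpeed_neg_reverse] at hreflected
  linarith

theorem b2_bounds_P_type_general {a₂₃ a₁₄ b₂ : K}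
    (h12 : κ₁ < κ₂) (h13 : κ₁ < κ₃) (h24 : κ₂ < κ₄) (h34 : κ₃ < κ₄)
    (hne : κ₂ + κ₃ ≠ κ₁ + κ₄)
    (ha23 : a₂₃ = (κ₂ + κ₃) / 2) (ha14 : a₁₄ = (κ₁ + κ₄) / 2)
    (hb₂ : b₂ = 2 * (a₂₃ + a₁₄) + (κ₁ * κ₄ - κ₂ * κ₃) / (2 * (a₂₃ - a₁₄))) :
    (a₂₃ < a₁₄ → κ₂ + 2 * κ₃ < b₂ ∧ 2 * κ₁ + κ₄ < b₂)
    ∧ (a₁₄ < a₂₃ → b₂ < 2 * κ₂ + κ₃ ∧ b₂ < κ₁ + 2 * κ₄) := by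
  have hsum23 : κ₂ + κ₃ = 2 * a₂₃ := by linarith
  have hsum14 : κ₁ + κ₄ = 2 * a₁₄ := by linarith
  have hspeed : b₂ = transverseSpeed κ₁ κ₂ κ₃ κ₄ := by
    rw [transverseSpeed_eq_add_div hne, hsum23, hsum14, ← mul_add, ← mul_sub, hb₂]
  rw [hspeed]
  refine ⟨fun h => ?_, fun h => ?_⟩
  · have hlower : κ₂ + κ₃ + κ₄ < transverseSpeed κ₁ κ₂ κ₃ κ₄ :=
      add_add_lt_transverseSpeed h12 h13 (by linarith)
    constructor <;> linarith
  · have hupper : transverseSpeed κ₁ κ₂ κ₃ κ₄ < κ₁ + κ₂ + κ₃ :=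
      transverseSpeed_lt_add_add h24 h34 (by linarith)
    constructor <;> linarith

end LinearOrderedField

/-- bounds on the transverse speed b₂ for P-type 2-line solitons. -/
theorem b2_bounds_P_type
    (κ₁ κ₂ κ₃ κ₄ a₂₃ a₁₄ b₂ : ℝ)
    (h12 : κ₁ < κ₂) (h23 : κ₂ < κ₃) (h34 : κ₃ < κ₄)
    (hne : κ₂ + κ₃ ≠ κ₁ + κ₄)
    (ha23 : a₂₃ = (κ₂ + κ₃)/2) (ha14 : a₁₄ = (κ₁ + κ₄)/2)
    (hb₂ : b₂ = 2*(a₂₃ + a₁₄) + (κ₁*κ₄ - κ₂*κ₃)/(2*(a₂₃ - a₁₄))) :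
    (a₂₃ < a₁₄ → κ₂ + 2*κ₃ < b₂ ∧ 2*κ₁ + κ₄ < b₂)
    ∧ (a₁₄ < a₂₃ → b₂ < 2*κ₂ + κ₃ ∧ b₂ < κ₁ + 2*κ₄) :=
  b2_bounds_P_type_general h12 (h12.trans h23) (h23.trans h34) h34 hne ha23 ha14 hb₂
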